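/- Let {A, B, C, D} be a cap-partition of AG(4,3) (four pairwise disjoint maximal caps, listed distinctly, whose union is the complement of a single point). Then the pair {A, B} lies in exactly one cap-partition of AG(4,3) if and only if the pair {C, D} lies in exactly one cap-partition of AG(4,3); equivalently, {A, B} lies in exactly two cap-partitions if and only if {C, D} does. -/

import Mathlib

/-- A cap in `AG(n,3)`: a finite set of points of `Fin n → ZMod 3` containing no
three distinct collinear points (three distinct points are collinear iff they sum to zero). -/
def IsCap {n : ℕ} (C : Finset (Fin n → ZMod 3)) : Prop :=
  ∀ x ∈ C, ∀ y ∈ C, ∀ z ∈ C, x ≠ y → x ≠ z → y ≠ z → x + y + z ≠ 0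

/-- A maximal cap: a cap of largest possible size. -/
def MaximalCap {n : ℕ} (C : Finset (Fin n → ZMod 3)) : Prop :=
  IsCap C ∧ ∀ D : Finset (Fin n → ZMod 3), IsCap D → D.card ≤ C.card

/-- A cap-partition of `AG(4,3)`: an unordered set of four pairwise disjoint maximal caps
whose union is the complement of a single point. -/
def IsCapPartition (P : Finset (Finset (Fin 4 → ZMod 3))) : Prop :=
  P.card = 4 ∧ (∀ C ∈ P, MaximalCap C) ∧
  (∀ C ∈ P, ∀ D ∈ P, C ≠ D → Disjoint C D) ∧
  ∃ a : Fin 4 → ZMod 3, P.sup id = Finset.univ \ {a}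

/-!
Counting the incidences of a cap with all hyperplanes shows that a 20-cap of `AG(4,3)` meets some
parallel class of hyperplanes in `2`, `9` and `9` points, and that a 9-cap of `AG(3,3)` meets some
parallel class of planes in `1`, `4` and `4` points. Gluing the slices, a 9-cap is an elliptic
paraboloid and a 20-cap is an elliptic quadratic cone without its vertex.

The hyperplane counts of such a cone modulo nine detect the vertex. As a hyperplane has 27 points,
the four cones of a cap-partition all have the missing point `a` as vertex.

Take `a` as origin and let `A` and `B` be the cones of the forms `Q₀` and `Q`, with no common
nonzero zero. Some linear map exchanges the points where `Q₀ Q` vanishes with the points where it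
does not: after an isometry of `Q₀` and a scaling of `Q`, this is a finite check. So an affine map
exchanges `A ∪ B` and `C ∪ D`. The cap-partitions through `A` and `B` correspond to the tilings of
`C ∪ D` by two maximal caps, those through `C` and `D` to the tilings of `A ∪ B`, and these are
equinumerous.
-/

section Caps

open Finset Module

variable {V : Type*} [AddCommGroup V] [Module (ZMod 3) V]

theorem add_add_self_eq_zero (x : V) : x + x + x = 0 := by
  simpa [succ_nsmul] using ZModModule.char_nsmul_eq_zero 3 x

@[to_additive]
theorem prod_zmod_three {M : Type*} [CommMonoid M] (f : ZMod 3 → M) :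
    ∏ c, f c = f 0 * f 1 * f 2 :=
  Fin.prod_univ_three f

theorem threeAPFree_iff_add_add_eq_zero {S : Set V} :
    ThreeAPFree S ↔ ∀ x ∈ S, ∀ y ∈ S, ∀ z ∈ S, x + y + z = 0 → x = y := by
  have key (x y z : V) : x + z = y + y ↔ x + y + z = 0 := by
    rw [← add_left_inj y, add_add_self_eq_zero, add_right_comm]
  simp only [ThreeAPFree, key]

theorem eq_of_add_add_eq_zero {S : Set V} (hS : ThreeAPFree S) {x y z : V} (hx : x ∈ S)
    (hy : y ∈ S) (hz : z ∈ S) (h : x + y + z = 0) : x = y :=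
  threeAPFree_iff_add_add_eq_zero.mp hS x hx y hy z hz h

theorem card_filter_sum_eq_zero {S : Finset V} [DecidableEq V] (hS : ThreeAPFree (S : Set V)) :
    #{t ∈ S ×ˢ S ×ˢ S | t.1 + t.2.1 + t.2.2 = 0} = #S := by
  symm
  refine card_bij (fun x _ => (x, x, x)) ?_ (fun x _ y _ h => (Prod.ext_iff.mp h).1) ?_
  · exact fun x hx => mem_filter.mpr ⟨by simp [hx], add_add_self_eq_zero x⟩
  · rintro ⟨x, y, z⟩ h
    simp only [mem_filter, mem_product] at h
    obtain ⟨⟨hx, hy, hz⟩, h⟩ := h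
    obtain rfl := eq_of_add_add_eq_zero hS hx hy hz h
    obtain rfl := eq_of_add_add_eq_zero hS hx hz hy (by rwa [add_right_comm])
    exact ⟨x, hx, rfl⟩

omit [Module (ZMod 3) V] in
theorem card_filter_sub_eq_zero (S : Finset V) [DecidableEq V] :
    #{t ∈ S ×ˢ S | t.1 - t.2 = 0} = #S := by
  simp only [sub_eq_zero]
  rw [← diag_eq_filter, diag_card]

/-- The number of points of `S` on the affine hyperplane `ξ = c`. -/
def hyperplaneCount (S : Finset V) (ξ : Dual (ZMod 3) V) (c : ZMod 3) : ℕ :=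
  #{x ∈ S | ξ x = c}

theorem sum_comp_eq_sum_hyperplaneCount (S : Finset V) (ξ : Dual (ZMod 3) V) (g : ZMod 3 → ℕ) :
    ∑ x ∈ S, g (ξ x) = ∑ c, hyperplaneCount S ξ c * g c := by
  rw [← sum_fiberwise S ξ]
  refine sum_congr rfl fun c _ => ?_
  rw [sum_congr rfl fun x hx => by rw [(mem_filter.mp hx).2], sum_const, smul_eq_mul,
    hyperplaneCount]

theorem sum_hyperplaneCount (S : Finset V) (ξ : Dual (ZMod 3) V) :
    ∑ c, hyperplaneCount S ξ c = #S := by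
  simpa using (sum_comp_eq_sum_hyperplaneCount S ξ fun _ => 1).symm

theorem card_filter_dual_sub (S : Finset V) (ξ : Dual (ZMod 3) V) :
    #{t ∈ S ×ˢ S | ξ (t.1 - t.2) = 0} = ∑ c, hyperplaneCount S ξ c ^ 2 := by
  rw [card_filter, sum_product]
  have inner (x : V) : (∑ y ∈ S, if ξ (x - y) = 0 then 1 else 0) =
      hyperplaneCount S ξ (ξ x) := by
    simp only [hyperplaneCount, card_filter, map_sub, sub_eq_zero, eq_comm (a := ξ x)]
  simp only [inner, sum_comp_eq_sum_hyperplaneCount S ξ (hyperplaneCount S ξ), sq]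

theorem card_filter_dual_sum (S : Finset V) (ξ : Dual (ZMod 3) V) :
    #{t ∈ S ×ˢ S ×ˢ S | ξ (t.1 + t.2.1 + t.2.2) = 0} =
      ∑ c, hyperplaneCount S ξ c ^ 3 + 6 * ∏ c, hyperplaneCount S ξ c := by
  simp only [card_filter, sum_product]
  have inner (x y : V) : (∑ z ∈ S, if ξ (x + y + z) = 0 then 1 else 0) =
      hyperplaneCount S ξ (-(ξ x + ξ y)) := by
    simp only [hyperplaneCount, card_filter, map_add, add_eq_zero_iff_neg_eq,
      eq_comm (b := ξ _)]
  simp only [inner]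
  rw [sum_congr rfl fun x _ => sum_comp_eq_sum_hyperplaneCount S ξ
    fun d => hyperplaneCount S ξ (-(ξ x + d)),
    sum_comp_eq_sum_hyperplaneCount S ξ
    fun c => ∑ d, hyperplaneCount S ξ d * hyperplaneCount S ξ (-(c + d))]
  have e : (-(0 + 0) : ZMod 3) = 0 ∧ (-(0 + 1) : ZMod 3) = 2 ∧ (-(0 + 2) : ZMod 3) = 1 ∧
    (-(1 + 0) : ZMod 3) = 2 ∧ (-(1 + 1) : ZMod 3) = 1 ∧ (-(1 + 2) : ZMod 3) = 0 ∧
    (-(2 + 0) : ZMod 3) = 1 ∧ (-(2 + 1) : ZMod 3) = 0 ∧ (-(2 + 2) : ZMod 3) = 2 := by decide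
  obtain ⟨e00, e01, e02, e10, e11, e12, e20, e21, e22⟩ := e
  simp only [sum_zmod_three, prod_zmod_three, e00, e01, e02, e10, e11, e12, e20, e21, e22]
  ring

theorem hyperplaneCount_zero (S : Finset V) (c : ZMod 3) :
    hyperplaneCount S 0 c = if c = 0 then #S else 0 := by
  split_ifs with h <;> simp [hyperplaneCount, h, eq_comm (a := (0 : ZMod 3))]

section Moments

variable [Fintype (Dual (ZMod 3) V)]

theorem card_dual : Fintype.card (Dual (ZMod 3) V) = 3 ^ finrank (ZMod 3) V := by
  rw [card_eq_pow_finrank (K := ZMod 3), Subspace.dual_finrank_eq, ZMod.card]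

variable [FiniteDimensional (ZMod 3) V]

theorem three_mul_card_filter_dual_apply_eq_zero {u : V} (hu : u ≠ 0) :
    3 * #{ξ : Dual (ZMod 3) V | ξ u = 0} = 3 ^ finrank (ZMod 3) V := by
  have hker : #{ξ : Dual (ZMod 3) V | ξ u = 0} =
      Nat.card (LinearMap.ker (Dual.eval (ZMod 3) V u)) := by
    rw [← Fintype.card_subtype, ← Nat.card_eq_fintype_card]
    rfl
  have hu' : Dual.eval (ZMod 3) V u ≠ 0 := (eval_apply_eq_zero_iff (ZMod 3) u).not.mpr hu
  rw [hker, natCard_eq_pow_finrank (K := ZMod 3), Nat.card_zmod, ← pow_succ',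
    Dual.finrank_ker_add_one_of_ne_zero hu', Subspace.dual_finrank_eq]

theorem three_mul_sum_card_filter_dual [DecidableEq V] {ι : Type*}
    (T : Finset ι) (f : ι → V) :
    3 * ∑ ξ : Dual (ZMod 3) V, #{t ∈ T | ξ (f t) = 0} =
      3 ^ finrank (ZMod 3) V * (#T + 2 * #{t ∈ T | f t = 0}) := by
  have inner (u : V) : 3 * #{ξ : Dual (ZMod 3) V | ξ u = 0} =
      3 ^ finrank (ZMod 3) V * (1 + 2 * if u = 0 then 1 else 0) := by
    split_ifs with h
    · simp only [h, map_zero, filter_true, card_univ, card_dual]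
      ring
    · rw [three_mul_card_filter_dual_apply_eq_zero h, mul_zero, add_zero, mul_one]
  simp only [card_filter]
  rw [sum_comm, mul_sum]
  simp only [← card_filter, inner]
  rw [← mul_sum, sum_add_distrib, ← mul_sum, card_filter, sum_const, smul_eq_mul, mul_one]

theorem three_mul_sum_sq_hyperplaneCount (S : Finset V) :
    3 * ∑ ξ : Dual (ZMod 3) V, ∑ c, hyperplaneCount S ξ c ^ 2 =
      3 ^ finrank (ZMod 3) V * (#S ^ 2 + 2 * #S) := by
  classical
  simp only [← card_filter_dual_sub]
  rw [three_mul_sum_card_filter_dual, card_product, sq]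
  congr!
  exact card_filter_sub_eq_zero S

theorem three_mul_sum_cube_hyperplaneCount {S : Finset V} (hS : ThreeAPFree (S : Set V)) :
    3 * ∑ ξ : Dual (ZMod 3) V,
        (∑ c, hyperplaneCount S ξ c ^ 3 + 6 * ∏ c, hyperplaneCount S ξ c) =
      3 ^ finrank (ZMod 3) V * (#S ^ 3 + 2 * #S) := by
  classical
  simp only [← card_filter_dual_sum]
  rw [three_mul_sum_card_filter_dual, card_filter_sum_eq_zero hS, card_product, card_product,
    pow_three]

theorem three_mul_sum_sq_hyperplaneCount_erase_zero [DecidableEq (Dual (ZMod 3) V)] (S : Finset V) :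
    3 * ∑ ξ ∈ univ.erase (0 : Dual (ZMod 3) V), ∑ c, hyperplaneCount S ξ c ^ 2 + 3 * #S ^ 2 =
      3 ^ finrank (ZMod 3) V * (#S ^ 2 + 2 * #S) := by
  rw [← three_mul_sum_sq_hyperplaneCount, ← sum_erase_add _ _ (mem_univ 0), mul_add]
  simp [hyperplaneCount_zero]

theorem three_mul_sum_cube_hyperplaneCount_erase_zero [DecidableEq (Dual (ZMod 3) V)] {S : Finset V}
    (hS : ThreeAPFree (S : Set V)) :
    3 * ∑ ξ ∈ univ.erase (0 : Dual (ZMod 3) V),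
        (∑ c, hyperplaneCount S ξ c ^ 3 + 6 * ∏ c, hyperplaneCount S ξ c) + 3 * #S ^ 3 =
      3 ^ finrank (ZMod 3) V * (#S ^ 3 + 2 * #S) := by
  rw [← three_mul_sum_cube_hyperplaneCount hS, ← sum_erase_add _ _ (mem_univ 0), mul_add]
  simp [hyperplaneCount_zero, prod_zmod_three]

end Moments

variable {W : Type*} [AddCommGroup W] [Module (ZMod 3) W]

/-- The preimage of `S` under the injective affine map `k ↦ p + f k`. -/
noncomputable def affinePreimage (S : Finset V) {f : W →ₗ[ZMod 3] V} (hf : Function.Injective f)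
    (p : V) : Finset W :=
  S.preimage (fun k => p + f k) fun _ _ _ _ h => hf (add_left_cancel h)

@[simp]
theorem mem_affinePreimage {S : Finset V} {f : W →ₗ[ZMod 3] V} {hf : Function.Injective f}
    {p : V} {k : W} : k ∈ affinePreimage S hf p ↔ p + f k ∈ S :=
  mem_preimage

theorem threeAPFree_affinePreimage {S : Finset V} (hS : ThreeAPFree (S : Set V))
    {f : W →ₗ[ZMod 3] V} (hf : Function.Injective f) (p : V) :
    ThreeAPFree (affinePreimage S hf p : Set W) := by
  rw [threeAPFree_iff_add_add_eq_zero]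
  intro x hx y hy z hz h
  refine hf (add_left_cancel (eq_of_add_add_eq_zero hS (mem_affinePreimage.mp hx)
    (mem_affinePreimage.mp hy) (mem_affinePreimage.mp hz) ?_))
  rw [show p + f x + (p + f y) + (p + f z) = p + p + p + (f x + f y + f z) by abel, ← map_add,
    ← map_add, h, map_zero, add_add_self_eq_zero, add_zero]

theorem card_affinePreimage_of_bijective (S : Finset V) {f : W →ₗ[ZMod 3] V}
    (hf : Function.Bijective f) (p : V) : #(affinePreimage S hf.1 p) = #S := by
  refine card_bij (fun k _ => p + f k) (fun k hk => mem_affinePreimage.mp hk)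
    (fun _ _ _ _ h => hf.1 (add_left_cancel h)) fun x hx => ?_
  obtain ⟨k, hk⟩ := hf.2 (x - p)
  have hx' : p + f k = x := by rw [hk, add_sub_cancel]
  exact ⟨k, mem_affinePreimage.mpr (by rwa [hx']), hx'⟩

/-- The hyperplane section of `S` parallel to `ker ξ` and through the point `p`, translated into
`ker ξ` by `-p`. -/
noncomputable abbrev slice (S : Finset V) (ξ : Dual (ZMod 3) V) (p : V) :
    Finset (LinearMap.ker ξ) :=
  affinePreimage S (LinearMap.ker ξ).injective_subtype p

theorem card_slice (S : Finset V) (ξ : Dual (ZMod 3) V) (p : V) :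
    #(slice S ξ p) = hyperplaneCount S ξ (ξ p) := by
  refine card_bij (fun k _ => p + k) ?_ (fun _ _ _ _ h => Subtype.ext (add_left_cancel h)) ?_
  · exact fun k hk => mem_filter.mpr ⟨mem_affinePreimage.mp hk, by simp⟩
  · intro x hx
    obtain ⟨hxS, hx⟩ := mem_filter.mp hx
    exact ⟨⟨x - p, by simp [hx]⟩, by simpa using hxS, add_sub_cancel p x⟩

theorem exists_dual_apply_eq {ξ : Dual (ZMod 3) V} (hξ : ξ ≠ 0) (c : ZMod 3) : ∃ p, ξ p = c :=
  LinearMap.surjective hξ c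

universe u

/-- Every cap in `AG(n,3)` has at most `K` points. -/
def CapBound (n K : ℕ) : Prop :=
  ∀ (W : Type u) [AddCommGroup W] [Module (ZMod 3) W] [FiniteDimensional (ZMod 3) W],
    finrank (ZMod 3) W = n → ∀ S : Finset W, ThreeAPFree (S : Set W) → #S ≤ K

theorem CapBound.hyperplaneCount_le {n K : ℕ} {V : Type u} [AddCommGroup V] [Module (ZMod 3) V]
    [FiniteDimensional (ZMod 3) V] (hK : CapBound.{u} n K) (hV : finrank (ZMod 3) V = n + 1)
    {S : Finset V} (hS : ThreeAPFree (S : Set V)) {ξ : Dual (ZMod 3) V} (hξ : ξ ≠ 0)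
    (c : ZMod 3) : hyperplaneCount S ξ c ≤ K := by
  obtain ⟨p, rfl⟩ := exists_dual_apply_eq hξ c
  rw [← card_slice]
  refine hK _ ?_ _ (threeAPFree_affinePreimage hS _ p)
  have := Dual.finrank_ker_add_one_of_ne_zero hξ
  omega

theorem CapBound.succ {n K m B : ℕ} (hK : CapBound.{u} n K)
    (hB : ∀ a ≤ K, ∀ b ≤ K, ∀ c ≤ K, a + b + c = m + 1 → a ^ 2 + b ^ 2 + c ^ 2 ≤ B)
    (hlt : (m + 1) ^ 2 + (3 ^ (n + 1) - 1) * B < 3 ^ n * ((m + 1) ^ 2 + 2 * (m + 1))) :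
    CapBound.{u} (n + 1) m := by
  classical
  intro V _ _ _ hV S hS
  by_contra! hm
  obtain ⟨T, hTS, hTm⟩ := exists_subset_card_eq (Nat.succ_le_of_lt hm)
  have hT : ThreeAPFree (T : Set V) := hS.mono (coe_subset.mpr hTS)
  have : Finite (Dual (ZMod 3) V) := Module.finite_of_finite (ZMod 3)
  have := Fintype.ofFinite (Dual (ZMod 3) V)
  have hsum : ∑ ξ ∈ univ.erase (0 : Dual (ZMod 3) V), ∑ c, hyperplaneCount T ξ c ^ 2 ≤
      (3 ^ (n + 1) - 1) * B := by
    rw [← hV, ← card_dual, ← card_univ, ← card_erase_of_mem (mem_univ 0)]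
    refine sum_le_card_nsmul _ _ B fun ξ hξ => ?_
    have hc := hK.hyperplaneCount_le hV hT (ne_of_mem_erase hξ)
    have htot := sum_hyperplaneCount T ξ
    rw [sum_zmod_three] at htot ⊢
    exact hB _ (hc 0) _ (hc 1) _ (hc 2) (htot.trans hTm)
  have := three_mul_sum_sq_hyperplaneCount_erase_zero T
  rw [hTm, hV, pow_succ' 3 n, mul_assoc, Nat.succ_eq_add_one] at this
  omega

theorem capBound_one : CapBound.{u} 1 2 := by
  intro V _ _ _ hV S hS
  by_contra! hS3
  have hcard : Nat.card V = 3 := by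
    rw [natCard_eq_pow_finrank (K := ZMod 3), hV, Nat.card_zmod, pow_one]
  have : Finite V := Nat.finite_of_card_ne_zero (by omega)
  have := Fintype.ofFinite V
  have : Nontrivial V := nontrivial_of_finrank_pos (R := ZMod 3) (by omega)
  have hmem (x : V) : x ∈ S := by
    rw [Nat.card_eq_fintype_card] at hcard
    rw [eq_univ_of_card S (le_antisymm (card_le_univ S) (by omega))]
    exact mem_univ x
  obtain ⟨v, hv⟩ := exists_ne (0 : V)
  exact hv (eq_of_add_add_eq_zero hS (hmem v) (hmem 0) (hmem (-v)) (by abel))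

theorem capBound_two : CapBound.{u} 2 4 :=
  capBound_one.succ (B := 9) (by decide +kernel) (by norm_num)

theorem capBound_three : CapBound.{u} 3 9 :=
  capBound_two.succ (B := 36) (by decide +kernel) (by norm_num)

variable {V : Type u} [AddCommGroup V] [Module (ZMod 3) V] [FiniteDimensional (ZMod 3) V]

set_option synthInstance.maxSize 10000 in
theorem sum_sq_le_of_ne_one_four_four {n : ZMod 3 → ℕ} (hn : ∀ c, n c ≤ 4)
    (hsum : ∑ c, n c = 9) (hne : ∀ c, n c = 1 → n (c + 1) = 4 → n (c - 1) ≠ 4) :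
    ∑ c, n c ^ 2 ≤ 29 := by
  have key : ∀ a ≤ 4, ∀ b ≤ 4, ∀ c ≤ 4, a + b + c = 9 → (a = 1 → b = 4 → c ≠ 4) →
      (b = 1 → c = 4 → a ≠ 4) → (c = 1 → a = 4 → b ≠ 4) → a ^ 2 + b ^ 2 + c ^ 2 ≤ 29 := by
    decide +kernel
  rw [sum_zmod_three] at hsum ⊢
  exact key _ (hn 0) _ (hn 1) _ (hn 2) hsum (hne 0) (hne 1) (hne 2)

theorem exists_hyperplaneCount_one_four_four {S : Finset V} (hV : finrank (ZMod 3) V = 3)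
    (hS : ThreeAPFree (S : Set V)) (hcard : #S = 9) :
    ∃ ξ : Dual (ZMod 3) V, ξ ≠ 0 ∧ ∃ c, hyperplaneCount S ξ c = 1 ∧
      hyperplaneCount S ξ (c + 1) = 4 ∧ hyperplaneCount S ξ (c - 1) = 4 := by
  classical
  by_contra! hno
  have : Finite (Dual (ZMod 3) V) := Module.finite_of_finite (ZMod 3)
  have := Fintype.ofFinite (Dual (ZMod 3) V)
  have hsum : ∑ ξ ∈ univ.erase (0 : Dual (ZMod 3) V), ∑ c, hyperplaneCount S ξ c ^ 2 ≤
      #(univ.erase (0 : Dual (ZMod 3) V)) * 29 :=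
    sum_le_card_nsmul _ _ _ fun ξ hξ => sum_sq_le_of_ne_one_four_four
      (capBound_two.hyperplaneCount_le hV hS (ne_of_mem_erase hξ))
      ((sum_hyperplaneCount S ξ).trans hcard) (hno ξ (ne_of_mem_erase hξ))
  rw [card_erase_of_mem (mem_univ 0), card_univ, card_dual, hV] at hsum
  have := three_mul_sum_sq_hyperplaneCount_erase_zero S
  rw [hcard, hV] at this
  omega

set_option synthInstance.maxSize 10000 in
theorem cube_moment_add_sq_moment_ge_of_ne_two_nine_nine {n : ZMod 3 → ℕ} (hn : ∀ c, n c ≤ 9)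
    (hsum : ∑ c, n c = 20) (hne : ∀ c, n c = 2 → n (c + 1) = 9 → n (c - 1) ≠ 9) :
    33494 ≤ 10 * (∑ c, n c ^ 3 + 6 * ∏ c, n c) + 51 * ∑ c, n c ^ 2 := by
  have key : ∀ a ≤ 9, ∀ b ≤ 9, ∀ c ≤ 9, a + b + c = 20 → (a = 2 → b = 9 → c ≠ 9) →
      (b = 2 → c = 9 → a ≠ 9) → (c = 2 → a = 9 → b ≠ 9) →
      33494 ≤ 10 * (a ^ 3 + b ^ 3 + c ^ 3 + 6 * (a * b * c)) + 51 * (a ^ 2 + b ^ 2 + c ^ 2) := by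
    decide +kernel
  rw [sum_zmod_three] at hsum
  rw [sum_zmod_three, sum_zmod_three, prod_zmod_three]
  exact key _ (hn 0) _ (hn 1) _ (hn 2) hsum (hne 0) (hne 1) (hne 2)

theorem exists_hyperplaneCount_two_nine_nine {S : Finset V} (hV : finrank (ZMod 3) V = 4)
    (hS : ThreeAPFree (S : Set V)) (hcard : #S = 20) :
    ∃ ξ : Dual (ZMod 3) V, ξ ≠ 0 ∧ ∃ c, hyperplaneCount S ξ c = 2 ∧
      hyperplaneCount S ξ (c + 1) = 9 ∧ hyperplaneCount S ξ (c - 1) = 9 := by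
  classical
  by_contra! hno
  have : Finite (Dual (ZMod 3) V) := Module.finite_of_finite (ZMod 3)
  have := Fintype.ofFinite (Dual (ZMod 3) V)
  have hsum : #(univ.erase (0 : Dual (ZMod 3) V)) * 33494 ≤
      ∑ ξ ∈ univ.erase (0 : Dual (ZMod 3) V),
        (10 * (∑ c, hyperplaneCount S ξ c ^ 3 + 6 * ∏ c, hyperplaneCount S ξ c) +
          51 * ∑ c, hyperplaneCount S ξ c ^ 2) :=
    card_nsmul_le_sum _ _ _ fun ξ hξ => cube_moment_add_sq_moment_ge_of_ne_two_nine_nine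
      (capBound_three.hyperplaneCount_le hV hS (ne_of_mem_erase hξ))
      ((sum_hyperplaneCount S ξ).trans hcard) (hno ξ (ne_of_mem_erase hξ))
  rw [card_erase_of_mem (mem_univ 0), card_univ, card_dual, hV, sum_add_distrib, ← mul_sum,
    ← mul_sum] at hsum
  have h2 := three_mul_sum_sq_hyperplaneCount_erase_zero S
  have h3 := three_mul_sum_cube_hyperplaneCount_erase_zero hS
  rw [hcard, hV] at h2 h3
  omega

end Caps

section Structure

open Finset Module

variable {V : Type*} [AddCommGroup V] [Module (ZMod 3) V]
  [FiniteDimensional (ZMod 3) V]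

theorem zmod_three_cases : ∀ c : ZMod 3, c = 0 ∨ c = 1 ∨ c = -1 := by decide

/-- The third points of the six secants of `T` lie among the five points off `T`, so two secants
share their third point. -/
theorem exists_add_eq_add_of_card_eq_four [DecidableEq V] {T : Finset V}
    (hV : finrank (ZMod 3) V = 2) (hT : ThreeAPFree (T : Set V)) (hcard : #T = 4) :
    ∃ x w y z, x ≠ w ∧ y ≠ z ∧ x ≠ y ∧ x ≠ z ∧ x + w = y + z ∧ T = {x, w, y, z} := by
  have hV9 : Nat.card V = 9 := by
    rw [natCard_eq_pow_finrank (K := ZMod 3), hV, Nat.card_zmod]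
    norm_num
  have : Finite V := Nat.finite_of_card_ne_zero (by omega)
  have := Fintype.ofFinite V
  have hmaps : ∀ s ∈ powersetCard 2 T, -∑ x ∈ s, x ∈ Tᶜ := by
    intro s hs
    obtain ⟨hsT, hs⟩ := mem_powersetCard.mp hs
    obtain ⟨x, w, hxw, rfl⟩ := card_eq_two.mp hs
    rw [sum_pair hxw, mem_compl]
    exact fun h => hxw (eq_of_add_add_eq_zero hT (hsT (by simp)) (hsT (by simp)) h
      (add_neg_cancel _))
  obtain ⟨s, hs, s', hs', hne, heq⟩ := exists_ne_map_eq_of_card_lt_of_maps_to (by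
    rw [card_powersetCard, card_compl, ← Nat.card_eq_fintype_card, hV9, hcard]; decide) hmaps
  obtain ⟨hsT, hs⟩ := mem_powersetCard.mp hs
  obtain ⟨hsT', hs'⟩ := mem_powersetCard.mp hs'
  obtain ⟨x, w, hxw, rfl⟩ := card_eq_two.mp hs
  obtain ⟨y, z, hyz, rfl⟩ := card_eq_two.mp hs'
  rw [sum_pair hxw, sum_pair hyz, neg_inj] at heq
  have hxy : x ≠ y := by
    rintro rfl
    exact hne (by rw [add_left_cancel heq])
  have hxz : x ≠ z := by
    rintro rfl
    exact hne (by rw [add_comm y, add_right_inj] at heq; rw [heq, pair_comm])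
  have hwy : w ≠ y := by
    rintro rfl
    exact hxz (by rwa [add_comm w, add_left_inj] at heq)
  have hwz : w ≠ z := fun h => hxy (by rwa [h, add_left_inj] at heq)
  refine ⟨x, w, y, z, hxw, hyz, hxy, hxz, heq, (eq_of_subset_of_card_le ?_ ?_).symm⟩
  · exact insert_subset (hsT (by simp)) (insert_subset (hsT (by simp)) hsT')
  · rw [hcard, card_insert_of_notMem (by simp [hxw, hxy, hxz]),
      card_insert_of_notMem (by simp [hwy, hwz]), card_pair hyz]

theorem exists_linearEquiv_single_eq {K E : Type*} [Field K] [AddCommGroup E] [Module K E]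
    [FiniteDimensional K E] {n : ℕ} {b : Fin n → E} (hb : LinearIndependent K b)
    (hE : finrank K E = n) : ∃ e : (Fin n → K) ≃ₗ[K] E, ∀ i, e (Pi.single i 1) = b i := by
  let B := basisOfLinearIndependentOfCardEqFinrank' b hb (by simp [hE])
  exact ⟨B.equivFun.symm, fun i => by simp [B]⟩

theorem exists_linearEquiv_mem_iff_of_card_eq_four {T : Finset V}
    (hV : finrank (ZMod 3) V = 2) (hT : ThreeAPFree (T : Set V)) (hcard : #T = 4) :
    ∃ (e : (Fin 2 → ZMod 3) ≃ₗ[ZMod 3] V) (c : V),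
      ∀ v, c + e v ∈ T ↔ v 0 ^ 2 + v 1 ^ 2 = 1 := by
  classical
  obtain ⟨x, w, y, z, hxw, hyz, hxy, hxz, heq, rfl⟩ := exists_add_eq_add_of_card_eq_four hV hT hcard
  have hx : x = -(x + w) + (w - x) := by
    rw [← sub_eq_zero, ← add_add_self_eq_zero x]; abel
  have hw : w = -(x + w) + -(w - x) := by
    rw [← sub_eq_zero, ← add_add_self_eq_zero w]; abel
  have hy : y = -(x + w) + (z - y) := by
    rw [heq, ← sub_eq_zero, ← add_add_self_eq_zero y]; abel
  have hz : z = -(x + w) + -(z - y) := by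
    rw [heq, ← sub_eq_zero, ← add_add_self_eq_zero z]; abel
  generalize -(x + w) = c, w - x = a, z - y = d at hx hw hy hz
  subst hx hw hy hz
  have ha : a ≠ 0 := by
    rintro rfl
    exact hxw (by rw [neg_zero])
  have hind : LinearIndependent (ZMod 3) ![a, d] := by
    rw [LinearIndependent.pair_iff' ha]
    intro r hr
    obtain rfl | rfl | rfl := zmod_three_cases r
    · exact hyz (by rw [← hr, zero_smul, neg_zero])
    · exact hxy (by rw [← hr, one_smul])
    · exact hxz (by rw [← hr, neg_one_smul, neg_neg])
  obtain ⟨e, he⟩ := exists_linearEquiv_single_eq hind hV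
  obtain rfl : e (Pi.single 0 1) = a := he 0
  obtain rfl : e (Pi.single 1 1) = d := he 1
  refine ⟨e, c, fun v => ?_⟩
  simp only [mem_insert, mem_singleton, add_right_inj, ← map_neg, e.injective.eq_iff]
  revert v
  decide

theorem mem_iff_sq_add_sq_eq_two {T : Finset (Fin 2 → ZMod 3)}
    (hT : ThreeAPFree (T : Set (Fin 2 → ZMod 3))) (hcard : #T = 4)
    (havoid : ∀ k ∈ T, k 0 ^ 2 + k 1 ^ 2 ≠ 1) (k : Fin 2 → ZMod 3) :
    k ∈ T ↔ k 0 ^ 2 + k 1 ^ 2 = 2 := by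
  have hcircle : #{k : Fin 2 → ZMod 3 | k 0 ^ 2 + k 1 ^ 2 = 2} = 4 := by decide
  have herase : T.erase 0 ⊆ ({k | k 0 ^ 2 + k 1 ^ 2 = 2} : Finset (Fin 2 → ZMod 3)) := by
    intro k hk
    obtain ⟨hk₀, hk⟩ := mem_erase.mp hk
    have : ∀ k : Fin 2 → ZMod 3, k ≠ 0 → k 0 ^ 2 + k 1 ^ 2 ≠ 1 → k 0 ^ 2 + k 1 ^ 2 = 2 := by
      decide
    exact mem_filter_univ _ |>.mpr (this k hk₀ (havoid k hk))
  have h₀ : 0 ∉ T := by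
    intro h₀
    have hdisj : Disjoint (T.erase 0) ((T.erase 0).map (Equiv.neg _).toEmbedding) := by
      rw [disjoint_left]
      intro k hk hk'
      obtain ⟨j, hj, rfl⟩ := mem_map.mp hk'
      obtain ⟨hk₀, hk⟩ := mem_erase.mp hk
      exact hk₀ (eq_of_add_add_eq_zero hT hk h₀ (mem_of_mem_erase hj) (by simp))
    have hsub : (T.erase 0).map (Equiv.neg _).toEmbedding ⊆
        ({k | k 0 ^ 2 + k 1 ^ 2 = 2} : Finset (Fin 2 → ZMod 3)) := by
      intro k hk
      obtain ⟨j, hj, rfl⟩ := mem_map.mp hk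
      simpa using herase hj
    have := card_le_card (union_subset herase hsub)
    rw [card_union_of_disjoint hdisj, card_map, card_erase_of_mem h₀, hcircle] at this
    omega
  rw [erase_eq_of_notMem h₀] at herase
  rw [eq_of_subset_of_card_le herase (by rw [hcard, hcircle]), mem_filter_univ]

omit [FiniteDimensional (ZMod 3) V] in
theorem exists_linearEquiv_cons {n : ℕ} {ξ : Dual (ZMod 3) V} {w : V} (hw : ξ w = 1)
    (e : (Fin n → ZMod 3) ≃ₗ[ZMod 3] LinearMap.ker ξ) :
    ∃ e' : (Fin (n + 1) → ZMod 3) ≃ₗ[ZMod 3] V,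
      ∀ v, e' v = v 0 • w + e (Fin.tail v) := by
  let f : (Fin (n + 1) → ZMod 3) →ₗ[ZMod 3] V :=
    (LinearMap.proj 0).smulRight w +
      (LinearMap.ker ξ).subtype ∘ₗ e.toLinearMap ∘ₗ LinearMap.funLeft _ _ Fin.succ
  have hf (v) : f v = v 0 • w + e (Fin.tail v) := rfl
  have hinj : Function.Injective f := by
    rw [injective_iff_map_eq_zero]
    intro v hv
    rw [hf] at hv
    have h₀ : v 0 = 0 := by simpa [hw] using congr_arg ξ hv
    rw [h₀, zero_smul, zero_add, ZeroMemClass.coe_eq_zero, map_eq_zero_iff e e.injective] at hv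
    rw [← Fin.cons_self_tail v, h₀, hv]
    exact Matrix.cons_zero_zero
  have hsurj : Function.Surjective f := by
    intro x
    have hx : x - ξ x • w ∈ LinearMap.ker ξ := by simp [hw]
    exact ⟨Fin.cons (ξ x) (e.symm ⟨_, hx⟩), by simp [hf]⟩
  exact ⟨LinearEquiv.ofBijective f ⟨hinj, hsurj⟩, hf⟩

/-- Membership in the elliptic paraboloid `v₀ = v₁² + v₂²` of `AG(3,3)`. -/
abbrev OnParaboloid (v : Fin 3 → ZMod 3) : Prop := v 0 = v 1 ^ 2 + v 2 ^ 2

omit [FiniteDimensional (ZMod 3) V] in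
theorem opposite_slice_mem_iff_sq_add_sq_eq_two {S : Finset V} (hS : ThreeAPFree (S : Set V))
    {ξ : Dual (ZMod 3) V} (e : (Fin 2 → ZMod 3) ≃ₗ[ZMod 3] LinearMap.ker ξ) {p w : V}
    (hw : ξ w = 1) (hp : p ∈ S) (hpos : ∀ v, p + w + e v ∈ S ↔ v 0 ^ 2 + v 1 ^ 2 = 1)
    (hneg : hyperplaneCount S ξ (ξ p - 1) = 4) (v : Fin 2 → ZMod 3) :
    p - w + e v ∈ S ↔ v 0 ^ 2 + v 1 ^ 2 = 2 := by
  have hmem (v) : v ∈ affinePreimage (slice S ξ (p - w)) e.injective 0 ↔ p - w + e v ∈ S := by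
    simp
  rw [← hmem]
  refine mem_iff_sq_add_sq_eq_two (threeAPFree_affinePreimage
    (threeAPFree_affinePreimage hS _ _) _ _) ?_ (fun v hv hv₁ => ?_) v
  · rw [card_affinePreimage_of_bijective _ e.bijective, card_slice, map_sub, hw, hneg]
  · have hv' : p + w + e (-v) ∈ S := (hpos _).mpr (by simpa using hv₁)
    have hpv := eq_of_add_add_eq_zero hS hp ((hmem v).mp hv) hv' (by
      rw [← add_add_self_eq_zero p, map_neg, Submodule.coe_neg]; abel)
    simpa [hw, eq_comm (a := ξ p)] using congr_arg ξ hpv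

theorem exists_linearEquiv_mem_iff_of_card_eq_nine {S : Finset V}
    (hV : finrank (ZMod 3) V = 3) (hS : ThreeAPFree (S : Set V)) (hcard : #S = 9) :
    ∃ (e : (Fin 3 → ZMod 3) ≃ₗ[ZMod 3] V) (p : V),
      ∀ v, p + e v ∈ S ↔ OnParaboloid v := by
  obtain ⟨ξ, hξ, c, h₁, h₄, h₄'⟩ := exists_hyperplaneCount_one_four_four hV hS hcard
  obtain ⟨p, hp⟩ := card_eq_one.mp h₁
  obtain ⟨hpS, rfl⟩ := mem_filter.mp (hp ▸ mem_singleton_self p)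
  obtain ⟨w₀, hw₀⟩ := exists_dual_apply_eq hξ 1
  have hker : finrank (ZMod 3) (LinearMap.ker ξ) = 2 := by
    have := Dual.finrank_ker_add_one_of_ne_zero hξ
    omega
  obtain ⟨e, c, he⟩ := exists_linearEquiv_mem_iff_of_card_eq_four (T := slice S ξ (p + w₀)) hker
    (threeAPFree_affinePreimage hS _ _) (by rw [card_slice, map_add, hw₀, h₄])
  simp only [mem_affinePreimage, Submodule.subtype_apply, Submodule.coe_add, ← add_assoc] at he
  set w : V := w₀ + c with hw
  have hξw : ξ w = 1 := by simp [hw, hw₀]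
  have hpw (v) : p + w + e v ∈ S ↔ v 0 ^ 2 + v 1 ^ 2 = 1 := by rw [← he, hw, ← add_assoc]
  have hpw' := opposite_slice_mem_iff_sq_add_sq_eq_two hS e hξw hpS hpw h₄'
  have hp₀ (v) : p + e v ∈ S ↔ v 0 ^ 2 + v 1 ^ 2 = 0 := by
    have h : ∀ v : Fin 2 → ZMod 3, v = 0 ↔ v 0 ^ 2 + v 1 ^ 2 = 0 := by decide
    rw [← h, ← map_eq_zero_iff e e.injective, ← ZeroMemClass.coe_eq_zero, ← add_eq_left (a := p),
      ← mem_singleton, ← hp, mem_filter]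
    simp
  obtain ⟨e', he'⟩ := exists_linearEquiv_cons hξw e
  refine ⟨e', p, fun v => ?_⟩
  rw [he', ← add_assoc]
  change _ ↔ v 0 = Fin.tail v 0 ^ 2 + Fin.tail v 1 ^ 2
  obtain h | h | h := zmod_three_cases (v 0)
  · rw [h, zero_smul, add_zero, hp₀, eq_comm]
  · rw [h, one_smul, hpw, eq_comm]
  · rw [h, neg_one_smul, ← sub_eq_add_neg, hpw', eq_comm]
    rfl

omit [FiniteDimensional (ZMod 3) V] in
/-- Double counting of the pairs of a point of `S` and a point of `Q \ S` whose line is contained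
in `Q`; every point of `Q` lies on exactly `m` lines contained in `Q`. -/
theorem three_mul_card_le_two_mul_card [DecidableEq V] {S Q : Finset V} {m : ℕ} (hm : 0 < m)
    (hS : ThreeAPFree (S : Set V)) (hSQ : S ⊆ Q)
    (hQ : ∀ x ∈ Q, #{y ∈ Q | x ≠ y ∧ -(x + y) ∈ Q} = 2 * m) :
    3 * #S ≤ 2 * #Q := by
  have habove : ∀ x ∈ S, m ≤ #((Q \ S).bipartiteAbove (fun x y => x ≠ y ∧ -(x + y) ∈ Q) x) := by
    intro x hx
    have hsub : ({y ∈ Q | x ≠ y ∧ -(x + y) ∈ Q} : Finset V) ⊆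
        (Q \ S).bipartiteAbove (fun x y => x ≠ y ∧ -(x + y) ∈ Q) x ∪
        ((Q \ S).bipartiteAbove (fun x y => x ≠ y ∧ -(x + y) ∈ Q) x).image
          fun y => -(x + y) := by
      intro y hy
      obtain ⟨hyQ, hxy, hzQ⟩ := mem_filter.mp hy
      rw [mem_union]
      by_cases hyS : y ∈ S
      · have hzS : -(x + y) ∉ S := fun hzS =>
          hxy (eq_of_add_add_eq_zero hS hx hyS hzS (add_neg_cancel _))
        refine .inr (mem_image.mpr ⟨-(x + y), ?_, by abel⟩)
        simp only [mem_bipartiteAbove, mem_sdiff]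
        refine ⟨⟨hzQ, hzS⟩, fun h => ?_, by simpa using hyQ⟩
        exact hzS (h ▸ hx)
      · simp only [mem_bipartiteAbove, mem_sdiff]
        exact .inl ⟨⟨hyQ, hyS⟩, hxy, hzQ⟩
    have := (card_le_card hsub).trans (card_union_le _ _)
    rw [hQ x (hSQ hx)] at this
    have := this.trans (Nat.add_le_add_left card_image_le _)
    omega
  have hbelow : ∀ y ∈ Q \ S, #(S.bipartiteBelow (fun x y => x ≠ y ∧ -(x + y) ∈ Q) y) ≤ 2 * m := by
    intro y hy
    rw [← hQ y (mem_sdiff.mp hy).1]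
    refine card_le_card fun x hx => ?_
    simp only [mem_bipartiteBelow, ne_comm (a := x), add_comm x] at hx
    exact mem_filter.mpr ⟨hSQ hx.1, hx.2⟩
  have := card_mul_le_card_mul _ habove hbelow
  rw [← mul_assoc, card_sdiff_of_subset hSQ] at this
  have := Nat.le_of_mul_le_mul_right this hm
  have := card_le_card hSQ
  omega

theorem vertical_of_forall_mem_not_onParaboloid {U : Finset (Fin 3 → ZMod 3)}
    (hU : ThreeAPFree (U : Set (Fin 3 → ZMod 3))) (hcard : #U = 9) {u : Fin 3 → ZMod 3}
    (havoid : ∀ v ∈ U, ¬OnParaboloid (v + u) ∧ ¬OnParaboloid (v - u)) : u 1 = 0 ∧ u 2 = 0 := by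
  let Q (u : Fin 3 → ZMod 3) : Finset (Fin 3 → ZMod 3) :=
    {v | ¬OnParaboloid (v + u) ∧ ¬OnParaboloid (v - u)}
  have hQ : ∀ u : Fin 3 → ZMod 3, ¬(u 1 = 0 ∧ u 2 = 0) → #(Q u) = 12 ∧
      ∀ x ∈ Q u, #{y ∈ Q u | x ≠ y ∧ -(x + y) ∈ Q u} = 2 * 3 := by
    decide +kernel
  by_contra hu
  have := three_mul_card_le_two_mul_card (Nat.succ_pos 2) hU
    (fun v hv => mem_filter_univ v |>.mpr (havoid v hv)) (hQ u hu).2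
  rw [(hQ u hu).1] at this
  omega

theorem mem_iff_onParaboloid {U : Finset (Fin 3 → ZMod 3)}
    (hU : ThreeAPFree (U : Set (Fin 3 → ZMod 3))) (hcard : #U = 9) {u : Fin 3 → ZMod 3}
    (hu : u ≠ 0) (havoid : ∀ v ∈ U, ¬OnParaboloid (v + u) ∧ ¬OnParaboloid (v - u))
    (v : Fin 3 → ZMod 3) : v ∈ U ↔ OnParaboloid v := by
  have hcap : #{v | OnParaboloid v} = 9 := by decide
  obtain ⟨h₁, h₂⟩ := vertical_of_forall_mem_not_onParaboloid hU hcard havoid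
  have hsub : U ⊆ ({v | OnParaboloid v} : Finset (Fin 3 → ZMod 3)) := by
    intro v hv
    obtain ⟨h, h'⟩ := havoid v hv
    have h₀ : u 0 ≠ 0 := fun h₀ => hu (by ext i; fin_cases i <;> assumption)
    rw [mem_filter_univ]
    simp only [OnParaboloid, Pi.add_apply, Pi.sub_apply, h₁, h₂, add_zero, sub_zero] at h h' ⊢
    generalize v 1 ^ 2 + v 2 ^ 2 = s at *
    revert h h' h₀
    generalize u 0 = a, v 0 = b
    revert a b s
    decide
  rw [eq_of_subset_of_card_le hsub (by rw [hcap, hcard]), mem_filter_univ]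

omit [FiniteDimensional (ZMod 3) V] in
theorem exists_center_of_card_eq_two {S : Finset V} {ξ : Dual (ZMod 3) V} {c : ZMod 3}
    (h : hyperplaneCount S ξ c = 2) :
    ∃ s d, ξ s = c ∧ d ≠ 0 ∧ ∀ x, (x ∈ S ∧ ξ x = c) ↔ x = s + d ∨ x = s - d := by
  classical
  obtain ⟨x, y, hxy, hS2⟩ := card_eq_two.mp h
  obtain ⟨-, hx⟩ := mem_filter.mp (hS2 ▸ mem_insert_self x {y})
  obtain ⟨-, hy⟩ := mem_filter.mp (hS2 ▸ mem_insert_of_mem (mem_singleton_self y))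
  have hx' : -(x + y) + (y - x) = x := by
    rw [← sub_eq_zero, ← neg_eq_zero, ← add_add_self_eq_zero x]; abel
  have hy' : -(x + y) - (y - x) = y := by
    rw [← sub_eq_zero, ← neg_eq_zero, ← add_add_self_eq_zero y]; abel
  refine ⟨-(x + y), y - x, ?_, sub_ne_zero.mpr hxy.symm, fun z => ?_⟩
  · rw [map_neg, map_add, hx, hy]
    exact neg_eq_of_add_eq_zero_right (add_add_self_eq_zero c)
  · rw [hx', hy']
    simpa using Finset.ext_iff.mp hS2 z

omit [FiniteDimensional (ZMod 3) V] in
theorem opposite_slice_mem_iff_onParaboloid {S : Finset V} (hS : ThreeAPFree (S : Set V))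
    {ξ : Dual (ZMod 3) V} (e : (Fin 3 → ZMod 3) ≃ₗ[ZMod 3] LinearMap.ker ξ) {s w : V}
    {u : Fin 3 → ZMod 3} (hw : ξ w = 1) (hu : u ≠ 0)
    (hmid : ∀ v, s + e v ∈ S ↔ v = u ∨ v = -u) (hpos : ∀ v, s + w + e v ∈ S ↔ OnParaboloid v)
    (hneg : hyperplaneCount S ξ (ξ s - 1) = 9) :
    (∀ v, s - w - e v ∈ S ↔ OnParaboloid v) ∧ u 1 = 0 ∧ u 2 = 0 := by
  let f : (Fin 3 → ZMod 3) ≃ₗ[ZMod 3] LinearMap.ker ξ := LinearEquiv.neg (ZMod 3) ≪≫ₗ e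
  let U : Finset (Fin 3 → ZMod 3) := affinePreimage (slice S ξ (s - w)) f.injective 0
  have hmem (v) : v ∈ U ↔ s - w - e v ∈ S := by simp [U, f, sub_eq_add_neg]
  have hU : ThreeAPFree (U : Set (Fin 3 → ZMod 3)) :=
    threeAPFree_affinePreimage (threeAPFree_affinePreimage hS _ _) _ _
  have hU₉ : #U = 9 := by
    rw [card_affinePreimage_of_bijective _ f.bijective, card_slice, map_sub, hw, hneg]
  have hne (v t) (hv : v ∈ U) (ht : -t = u ∨ -t = -u) : ¬OnParaboloid (v + t) := by
    intro hvt
    have := eq_of_add_add_eq_zero hS ((hmid (-t)).mpr ht) ((hmem v).mp hv) ((hpos _).mpr hvt) (by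
      rw [← add_add_self_eq_zero s, map_neg, map_add, Submodule.coe_neg, Submodule.coe_add]; abel)
    simpa [hw, eq_comm (a := ξ s)] using congr_arg ξ this
  have havoid (v) (hv : v ∈ U) : ¬OnParaboloid (v + u) ∧ ¬OnParaboloid (v - u) :=
    ⟨hne v u hv (.inr rfl), sub_eq_add_neg v u ▸ hne v (-u) hv (.inl (neg_neg u))⟩
  exact ⟨fun v => (hmem v).symm.trans (mem_iff_onParaboloid hU hU₉ hu havoid v),
    vertical_of_forall_mem_not_onParaboloid hU hU₉ havoid⟩

omit [FiniteDimensional (ZMod 3) V] in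
theorem exists_linearEquiv_mem_iff_of_slices {S : Finset V} {ξ : Dual (ZMod 3) V}
    (e : (Fin 3 → ZMod 3) ≃ₗ[ZMod 3] LinearMap.ker ξ) {s w : V} {u : Fin 3 → ZMod 3}
    (hw : ξ w = 1) (hu : u ≠ 0) (hu₁ : u 1 = 0) (hu₂ : u 2 = 0)
    (hmid : ∀ v, s + e v ∈ S ↔ v = u ∨ v = -u) (hpos : ∀ v, s + w + e v ∈ S ↔ OnParaboloid v)
    (hneg : ∀ v, s - w - e v ∈ S ↔ OnParaboloid v) :
    ∃ e' : (Fin 4 → ZMod 3) ≃ₗ[ZMod 3] V,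
      ∀ v, s + e' v ∈ S ↔ v ≠ 0 ∧ v 0 * v 1 = v 2 ^ 2 + v 3 ^ 2 := by
  obtain ⟨e', he'⟩ := exists_linearEquiv_cons hw e
  refine ⟨e', fun v => ?_⟩
  rw [he', ← add_assoc]
  obtain ⟨z, t, rfl⟩ : ∃ z t, v = Fin.cons z t := ⟨_, _, (Fin.cons_self_tail v).symm⟩
  rw [Fin.cons_zero, Fin.tail_cons]
  obtain rfl | rfl | rfl := zmod_three_cases z
  · rw [zero_smul, add_zero, hmid]
    have : ∀ u t : Fin 3 → ZMod 3, u ≠ 0 → u 1 = 0 → u 2 = 0 →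
        (t = u ∨ t = -u ↔ (Fin.cons 0 t : Fin 4 → ZMod 3) ≠ 0 ∧ 0 * t 0 = t 1 ^ 2 + t 2 ^ 2) := by
      decide +kernel
    exact this u t hu hu₁ hu₂
  · rw [one_smul, hpos]
    revert t
    decide
  · rw [neg_one_smul, ← sub_eq_add_neg, ← neg_neg t, map_neg, Submodule.coe_neg,
      ← sub_eq_add_neg, hneg, neg_neg t]
    revert t
    decide

theorem exists_linearEquiv_mem_iff_of_card_eq_twenty {S : Finset V}
    (hV : finrank (ZMod 3) V = 4) (hS : ThreeAPFree (S : Set V)) (hcard : #S = 20) :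
    ∃ (e : (Fin 4 → ZMod 3) ≃ₗ[ZMod 3] V) (s : V),
      ∀ v, s + e v ∈ S ↔ v ≠ 0 ∧ v 0 * v 1 = v 2 ^ 2 + v 3 ^ 2 := by
  obtain ⟨ξ, hξ, c, h₂, h₉, h₉'⟩ := exists_hyperplaneCount_two_nine_nine hV hS hcard
  obtain ⟨s, d, rfl, hd, hsd⟩ := exists_center_of_card_eq_two h₂
  obtain ⟨w₀, hw₀⟩ := exists_dual_apply_eq hξ 1
  have hker : finrank (ZMod 3) (LinearMap.ker ξ) = 3 := by
    have := Dual.finrank_ker_add_one_of_ne_zero hξ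
    omega
  obtain ⟨e, c, he⟩ := exists_linearEquiv_mem_iff_of_card_eq_nine (S := slice S ξ (s + w₀)) hker
    (threeAPFree_affinePreimage hS _ _) (by rw [card_slice, map_add, hw₀, h₉])
  simp only [mem_affinePreimage, Submodule.subtype_apply, Submodule.coe_add, ← add_assoc] at he
  set w : V := w₀ + c with hw
  have hξw : ξ w = 1 := by simp [hw, hw₀]
  have hsw (v) : s + w + e v ∈ S ↔ OnParaboloid v := by rw [← he, hw, ← add_assoc]
  obtain ⟨u, rfl⟩ : ∃ u, d = e u := by
    obtain ⟨-, hdξ⟩ := (hsd _).mpr (.inl rfl)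
    exact ⟨e.symm ⟨d, by simpa using hdξ⟩, by simp⟩
  have hu : u ≠ 0 := by
    rintro rfl
    simp at hd
  have hs₀ (v) : s + e v ∈ S ↔ v = u ∨ v = -u := by
    have := hsd (s + e v)
    rwa [sub_eq_add_neg, add_right_inj, add_right_inj, ← Submodule.coe_neg, ← map_neg,
      Subtype.coe_inj, Subtype.coe_inj, e.injective.eq_iff, e.injective.eq_iff, map_add,
      LinearMap.mem_ker.mp (e v).2, add_zero, eq_self, and_true] at this
  obtain ⟨hsw', hu₁, hu₂⟩ := opposite_slice_mem_iff_onParaboloid hS e hξw hu hs₀ hsw h₉'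
  obtain ⟨e', he'⟩ := exists_linearEquiv_mem_iff_of_slices e hξw hu hu₁ hu₂ hs₀ hsw hsw'
  exact ⟨e', s, he'⟩

end Structure

section Exchange

open Finset Module

/-- The elliptic quadratic form `v₀v₁ - v₂² - v₃²` of Witt index one on `(ℤ/3)⁴`. -/
def ellipticForm : QuadraticForm (ZMod 3) (Fin 4 → ZMod 3) :=
  QuadraticMap.proj 0 1 - QuadraticMap.proj 2 2 - QuadraticMap.proj 3 3

theorem ellipticForm_apply (v : Fin 4 → ZMod 3) :
    ellipticForm v = v 0 * v 1 - v 2 * v 2 - v 3 * v 3 := rfl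

/-- The quadratic form `v₀² + t v₀v₁ + ⋯` without the monomials `v₀v₂` and `v₀v₃`, to which every
form that is nonzero at `e₀` is reduced by an isometry of `ellipticForm` and a scaling. -/
def normalForm (t l m f x y z : ZMod 3) (v : Fin 4 → ZMod 3) : ZMod 3 :=
  v 0 ^ 2 + t * (v 0 * v 1) + v 1 * (l * v 2 + m * v 3) + f * v 1 ^ 2 +
    (x * v 2 ^ 2 + y * (v 2 * v 3) + z * v 3 ^ 2)

/-- Twelve matrices, found by computer search: whenever a form in normal form has an elliptic cone
disjoint from that of `ellipticForm`, one of them exchanges the points on the two cones with the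
points off both. -/
def exchangeMatrices : List (Matrix (Fin 4) (Fin 4) (ZMod 3)) :=
  [1, -1].flatMap fun ε =>
    [!![0, 0, ε, 1; 0, 0, 1, 0; 1, 0, 0, 0; -ε, -1, 0, 0],
      !![0, 0, -1, ε; 0, 0, 0, 1; ε, 1, 0, 0; 1, 0, 0, 0],
      !![1, 0, 1, ε; 0, -1, 1, 0; 1, 0, 0, 0; 0, -ε, -ε, 0],
      !![1, 0, ε, 1; 0, -1, 0, 1; 0, -ε, 0, -ε; 1, 0, 0, 0],
      !![1, 0, -1, -ε; 0, 1, 0, ε; 0, 1, 0, 0; ε, 0, ε, 1],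
      !![1, 0, 1, -ε; 0, 1, 0, ε; 0, -1, 0, 0; ε, 0, -ε, 1]]

set_option synthInstance.maxSize 1000 in
set_option maxRecDepth 10000 in
theorem exists_exchange_normalForm : ∀ t l m f x y z : ZMod 3,
    (∀ v, ellipticForm v = 0 → normalForm t l m f x y z v = 0 → v = 0) →
    #{v | normalForm t l m f x y z v = 0} = 21 →
    ∃ Γ ∈ exchangeMatrices, (∀ v, Γ.mulVec v = 0 → v = 0) ∧ ∀ v ≠ 0,
      (ellipticForm (Γ.mulVec v) * normalForm t l m f x y z (Γ.mulVec v) = 0 ↔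
        ellipticForm v * normalForm t l m f x y z v ≠ 0) := by
  simp only [ellipticForm_apply]
  decide +kernel

open QuadraticMap in
theorem apply_eq_normalForm_add {Q : QuadraticForm (ZMod 3) (Fin 4 → ZMod 3)}
    (hQ : Q (Pi.single 0 1) = 1) :
    ∃ t l m f x y z, ∀ v, Q v = normalForm t l m f x y z v +
      (polar Q (Pi.single 0 1) (Pi.single 2 1) * (v 0 * v 2) +
        polar Q (Pi.single 0 1) (Pi.single 3 1) * (v 0 * v 3)) := by
  let e (i : Fin 4) : Fin 4 → ZMod 3 := Pi.single i 1
  refine ⟨polar Q (e 0) (e 1), polar Q (e 1) (e 2), polar Q (e 1) (e 3), Q (e 1),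
    Q (e 2), polar Q (e 2) (e 3), Q (e 3), fun v => ?_⟩
  have hv : v = v 0 • e 0 + v 1 • e 1 + v 2 • e 2 + v 3 • e 3 := by
    ext i
    fin_cases i <;> simp [e]
  conv_lhs => rw [hv]
  simp only [QuadraticMap.map_add Q, QuadraticMap.map_smul, polar_add_left, polar_smul_left,
    polar_smul_right, smul_eq_mul, normalForm, e, hQ]
  ring

open QuadraticMap in
/-- A Siegel transformation fixing the isotropic vector `e₀` clears the two mixed coefficients. -/
theorem exists_isometry_polar_eq_zero {Q : QuadraticForm (ZMod 3) (Fin 4 → ZMod 3)}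
    (hQ : Q (Pi.single 0 1) = 1) :
    ∃ σ : (Fin 4 → ZMod 3) ≃ₗ[ZMod 3] (Fin 4 → ZMod 3),
      (∀ v, ellipticForm (σ v) = ellipticForm v) ∧ σ (Pi.single 0 1) = Pi.single 0 1 ∧
      polar Q (σ (Pi.single 0 1)) (σ (Pi.single 2 1)) = 0 ∧
      polar Q (σ (Pi.single 0 1)) (σ (Pi.single 3 1)) = 0 := by
  let M (ρ τ : ZMod 3) : Matrix (Fin 4) (Fin 4) (ZMod 3) :=
    !![1, ρ ^ 2 + τ ^ 2, -ρ, -τ; 0, 1, 0, 0; 0, ρ, 1, 0; 0, τ, 0, 1]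
  have hM : ∀ ρ τ, M ρ τ * M (-ρ) (-τ) = 1 ∧ M (-ρ) (-τ) * M ρ τ = 1 := by decide
  have hell : ∀ ρ τ v, ellipticForm ((M ρ τ).mulVec v) = ellipticForm v := by
    simp only [ellipticForm_apply]
    decide +kernel
  let e (i : Fin 4) : Fin 4 → ZMod 3 := Pi.single i 1
  have he : ∀ ρ τ, (M ρ τ).mulVec (e 0) = e 0 ∧ (M ρ τ).mulVec (e 2) = -ρ • e 0 + e 2 ∧
    (M ρ τ).mulVec (e 3) = -τ • e 0 + e 3 := by decide
  let ρ := -polar Q (e 0) (e 2)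
  let τ := -polar Q (e 0) (e 3)
  have hclear : ∀ p : ZMod 3, - -p * 2 • 1 + p = 0 := by decide
  obtain ⟨h₀, h₂, h₃⟩ := he ρ τ
  refine ⟨Matrix.toLin'OfInv (hM ρ τ).2 (hM ρ τ).1, hell ρ τ, h₀, ?_, ?_⟩
  · change polar Q ((M ρ τ).mulVec (e 0)) ((M ρ τ).mulVec (e 2)) = 0
    rw [h₀, h₂, polar_add_right, polar_smul_right, polar_self, hQ, smul_eq_mul]
    exact hclear _
  · change polar Q ((M ρ τ).mulVec (e 0)) ((M ρ τ).mulVec (e 3)) = 0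
    rw [h₀, h₃, polar_add_right, polar_smul_right, polar_self, hQ, smul_eq_mul]
    exact hclear _

theorem exists_exchange_of_apply_eq_one {Q : QuadraticForm (ZMod 3) (Fin 4 → ZMod 3)}
    (hQ : Q (Pi.single 0 1) = 1) (hdisj : ∀ v, ellipticForm v = 0 → Q v = 0 → v = 0)
    (hcard : #{v | Q v = 0} = 21) :
    ∃ Γ : (Fin 4 → ZMod 3) ≃ₗ[ZMod 3] (Fin 4 → ZMod 3), ∀ v ≠ 0,
      ellipticForm (Γ v) * Q (Γ v) = 0 ↔ ellipticForm v * Q v ≠ 0 := by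
  obtain ⟨σ, hσ, hσ₀, hσ₂, hσ₃⟩ := exists_isometry_polar_eq_zero hQ
  obtain ⟨t, l, m, f, x, y, z, hnf⟩ :=
    apply_eq_normalForm_add
      (Q := Q.comp (σ : (Fin 4 → ZMod 3) →ₗ[ZMod 3] (Fin 4 → ZMod 3))) (by simp [hσ₀, hQ])
  simp only [QuadraticMap.polar, QuadraticMap.comp_apply, LinearEquiv.coe_coe, map_add] at hnf
  simp only [QuadraticMap.polar] at hσ₂ hσ₃
  simp only [hσ₂, hσ₃, zero_mul, add_zero] at hnf
  obtain ⟨M, -, hinj, hM⟩ := exists_exchange_normalForm t l m f x y z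
    (fun v hv hv' => (map_eq_zero_iff σ σ.injective).mp
      (hdisj _ ((hσ v).trans hv) ((hnf v).trans hv')))
    (by
      rw [← hcard]
      refine card_equiv σ.toEquiv fun v => ?_
      simp [← hnf])
  let Γ := LinearEquiv.ofInjectiveEndo M.toLin'
    (LinearMap.ker_eq_bot.mp (LinearMap.ker_eq_bot'.mpr hinj))
  refine ⟨σ.symm ≪≫ₗ Γ ≪≫ₗ σ, fun v hv => ?_⟩
  obtain ⟨v, rfl⟩ := σ.surjective v
  have := hM v ((map_ne_zero_iff σ σ.injective).mp hv)
  simp only [← hnf] at this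
  simp only [LinearEquiv.trans_apply, LinearEquiv.symm_apply_apply, hσ]
  exact this

theorem exists_exchange {Q : QuadraticForm (ZMod 3) (Fin 4 → ZMod 3)}
    (hdisj : ∀ v, ellipticForm v = 0 → Q v = 0 → v = 0) (hcard : #{v | Q v = 0} = 21) :
    ∃ Γ : (Fin 4 → ZMod 3) ≃ₗ[ZMod 3] (Fin 4 → ZMod 3), ∀ v ≠ 0,
      ellipticForm (Γ v) * Q (Γ v) = 0 ↔ ellipticForm v * Q v ≠ 0 := by
  have hQ₀ : Q (Pi.single 0 1) ≠ 0 := fun h => absurd (hdisj _ (by decide) h) (by decide)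
  have hscale (v) : (Q (Pi.single 0 1) • Q) v = 0 ↔ Q v = 0 := by simp [hQ₀]
  have hone : (Q (Pi.single 0 1) • Q) (Pi.single 0 1) = 1 := by
    rw [smul_apply, smul_eq_mul]
    generalize Q (Pi.single 0 1) = q at hQ₀
    revert q
    decide
  obtain ⟨Γ, hΓ⟩ := exists_exchange_of_apply_eq_one hone (by simpa only [hscale] using hdisj)
    (by simpa only [hscale] using hcard)
  exact ⟨Γ, by simpa only [mul_eq_zero, ne_eq, hscale] using hΓ⟩

end Exchange

section Cone

open Finset Module

variable {V : Type*} [AddCommGroup V] [Module (ZMod 3) V]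

/-- `S` is, in suitable affine coordinates, the elliptic quadratic cone with vertex `s`, without
its vertex. -/
def IsPuncturedCone (S : Finset V) (s : V) : Prop :=
  ∃ e : (Fin 4 → ZMod 3) ≃ₗ[ZMod 3] V, ∀ v, s + e v ∈ S ↔ v ≠ 0 ∧ ellipticForm v = 0

theorem exists_isPuncturedCone [FiniteDimensional (ZMod 3) V] {S : Finset V}
    (hV : finrank (ZMod 3) V = 4) (hS : ThreeAPFree (S : Set V)) (hcard : #S = 20) :
    ∃ s, IsPuncturedCone S s := by
  obtain ⟨e, s, he⟩ := exists_linearEquiv_mem_iff_of_card_eq_twenty hV hS hcard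
  refine ⟨s, e, fun v => ?_⟩
  rw [he, ellipticForm_apply, sub_sub, sub_eq_zero, sq, sq]

theorem IsPuncturedCone.eq_neg_sum {S : Finset V} {s : V} (h : IsPuncturedCone S s) :
    s = -∑ x ∈ S, x := by
  obtain ⟨e, he⟩ := h
  have hcone : #{v : Fin 4 → ZMod 3 | v ≠ 0 ∧ ellipticForm v = 0} = 20 ∧
      ∑ v : Fin 4 → ZMod 3 with v ≠ 0 ∧ ellipticForm v = 0, v = 0 := by
    simp only [ellipticForm_apply]
    decide +kernel
  have hsum : ∑ v : Fin 4 → ZMod 3 with v ≠ 0 ∧ ellipticForm v = 0, (s + e v) = ∑ x ∈ S, x :=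
    sum_equiv (e.toEquiv.trans (Equiv.addLeft s)) (by simp [he]) (by simp)
  rw [sum_add_distrib, sum_const, hcone.1, ← map_sum, hcone.2, map_zero, add_zero] at hsum
  rw [← hsum, eq_neg_iff_add_eq_zero, ← succ_nsmul', show 20 + 1 = 7 * 3 from rfl, mul_nsmul]
  simp [ZModModule.char_nsmul_eq_zero 3]

theorem IsPuncturedCone.exists_hyperplaneCount_eq {S : Finset V} {s : V}
    (h : IsPuncturedCone S s) (ξ : Dual (ZMod 3) V) :
    ∃ k : ZMod 9, ∀ c, (hyperplaneCount S ξ c : ZMod 9) = k + if ξ s = c then 2 else 0 := by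
  obtain ⟨e, he⟩ := h
  have hcone : ∀ η : Fin 4 → ZMod 3, ∃ k : ZMod 9, ∀ c,
      (#{v | (v ≠ 0 ∧ ellipticForm v = 0) ∧ η ⬝ᵥ v = c} : ZMod 9) =
        k + if 0 = c then 2 else 0 := by
    simp only [ellipticForm_apply]
    decide +kernel
  let η : Fin 4 → ZMod 3 := fun i => ξ (e (Pi.single i 1))
  have hη (v) : η ⬝ᵥ v = ξ (e v) := by
    conv_rhs => rw [pi_eq_sum_univ' v]
    simp [dotProduct, η, mul_comm]
  obtain ⟨k, hk⟩ := hcone η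
  refine ⟨k, fun c => ?_⟩
  have hcount : hyperplaneCount S ξ c =
      #{v | (v ≠ 0 ∧ ellipticForm v = 0) ∧ η ⬝ᵥ v = c - ξ s} :=
    (card_equiv (e.toEquiv.trans (Equiv.addLeft s))
      (by simp [he, hη, eq_sub_iff_add_eq'])).symm
  rw [hcount, hk]
  simp only [eq_comm (a := (0 : ZMod 3)), sub_eq_zero, eq_comm (a := c)]

theorem hyperplaneCount_univ [Fintype V] [FiniteDimensional (ZMod 3) V] {n : ℕ}
    (hV : finrank (ZMod 3) V = n + 1) {ξ : Dual (ZMod 3) V} (hξ : ξ ≠ 0) (c : ZMod 3) :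
    hyperplaneCount univ ξ c = 3 ^ n := by
  obtain ⟨p, rfl⟩ := exists_dual_apply_eq hξ c
  have := Fintype.ofFinite (LinearMap.ker ξ)
  have hslice : slice univ ξ p = univ := eq_univ_of_forall fun x => by simp
  have hker := Dual.finrank_ker_add_one_of_ne_zero hξ
  rw [← card_slice, hslice, card_univ, ← Nat.card_eq_fintype_card,
    natCard_eq_pow_finrank (K := ZMod 3), Nat.card_zmod]
  congr 1
  omega

/-- Modulo nine the four caps and the missing point meet the hyperplanes `ξ = c` in
`k + 2 #{S | ξ (s S) = c} + [ξ a = c]` points, where `k` does not depend on `c`; a hyperplane has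
27 points, so this vanishes for every `c`. -/
theorem dual_center_eq [Fintype V] [DecidableEq V] [FiniteDimensional (ZMod 3) V]
    (hV : finrank (ZMod 3) V = 4) {P : Finset (Finset V)} {s : Finset V → V} {a : V}
    (hs : ∀ S ∈ P, IsPuncturedCone S (s S)) (hcard : #P = 4)
    (hdisj : (P : Set (Finset V)).PairwiseDisjoint id) (hsup : P.sup id = univ \ {a})
    (ξ : Dual (ZMod 3) V) : ∀ S ∈ P, ξ (s S) = ξ a := by
  obtain rfl | hξ := eq_or_ne ξ 0
  · simp
  choose! k hk using fun S hS => (hs S hS).exists_hyperplaneCount_eq ξ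
  let m (c : ZMod 3) : ℕ := #{S ∈ P | ξ (s S) = c}
  have htotal (c) : (∑ S ∈ P, k S + 2 * m c + if ξ a = c then 1 else 0 : ZMod 9) = 0 := by
    have hsplit : ∑ S ∈ P, hyperplaneCount S ξ c + hyperplaneCount {a} ξ c = 3 ^ 3 := by
      rw [← hyperplaneCount_univ hV hξ c]
      simp only [hyperplaneCount, card_filter]
      rw [← sum_sdiff (subset_univ {a}), ← hsup, sup_eq_biUnion, sum_biUnion hdisj]
      rfl
    have hone : hyperplaneCount {a} ξ c = if ξ a = c then 1 else 0 := by
      rw [hyperplaneCount, card_filter, sum_singleton]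
    have hmod := congrArg (Nat.cast : ℕ → ZMod 9) hsplit
    rw [Nat.cast_add, Nat.cast_sum, sum_congr rfl fun S hS => hk S hS c, sum_add_distrib,
      ← sum_filter, sum_const, nsmul_eq_mul, mul_comm (_ : ZMod 9), hone] at hmod
    exact_mod_cast hmod
  have hm (c) : m c ≤ 4 := hcard ▸ card_filter_le _ _
  have hma : m (ξ a) = 4 := by
    have h₀ := htotal (ξ a)
    have h₁ := htotal (ξ a + 1)
    rw [if_pos rfl] at h₀
    rw [if_neg (by simp)] at h₁
    have key : ∀ i ≤ 4, ∀ j ≤ 4, ∀ k : ZMod 9,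
        k + 2 * (i : ℕ) + 1 = 0 → k + 2 * (j : ℕ) + 0 = 0 → i = 4 := by decide +kernel
    exact key _ (hm _) _ (hm _) _ h₀ h₁
  exact filter_eq_self.mp (eq_of_subset_of_card_le (filter_subset _ _) (hcard.trans hma.symm).le)

theorem isPuncturedCone_of_sup_eq_sdiff [Fintype V] [DecidableEq V]
    [FiniteDimensional (ZMod 3) V] (hV : finrank (ZMod 3) V = 4) {P : Finset (Finset V)} {a : V}
    (hcap : ∀ S ∈ P, ThreeAPFree (S : Set V)) (h20 : ∀ S ∈ P, #S = 20) (hcard : #P = 4)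
    (hdisj : (P : Set (Finset V)).PairwiseDisjoint id) (hsup : P.sup id = univ \ {a}) :
    ∀ S ∈ P, IsPuncturedCone S a := by
  choose! s hs using fun S hS => exists_isPuncturedCone hV (hcap S hS) (h20 S hS)
  intro S hS
  have hsa : s S = a := sub_eq_zero.mp <| (forall_dual_apply_eq_zero_iff (ZMod 3) _).mp fun ξ => by
    rw [map_sub, dual_center_eq hV hs hcard hdisj hsup ξ S hS, sub_self]
  exact hsa ▸ hs S hS

theorem IsPuncturedCone.exists_affineEquiv [Fintype V] [DecidableEq V] {A B : Finset V} {a : V}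
    (hA : IsPuncturedCone A a) (hB : IsPuncturedCone B a) (hAB : Disjoint A B) :
    ∃ γ : V ≃ᵃ[ZMod 3] V, (A ∪ B).map γ.toEquiv.toEmbedding = (univ \ {a}) \ (A ∪ B) := by
  obtain ⟨e, he⟩ := hA
  obtain ⟨e', he'⟩ := hB
  let Q : QuadraticForm (ZMod 3) (Fin 4 → ZMod 3) :=
    ellipticForm.comp (e ≪≫ₗ e'.symm : (Fin 4 → ZMod 3) →ₗ[ZMod 3] (Fin 4 → ZMod 3))
  have hQ (v) : a + e v ∈ B ↔ v ≠ 0 ∧ Q v = 0 := by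
    simpa [Q] using he' (e'.symm (e v))
  have hdisj (v) (hv : ellipticForm v = 0) (hv' : Q v = 0) : v = 0 := by
    by_contra hne
    exact disjoint_left.mp hAB ((he v).mpr ⟨hne, hv⟩) ((hQ v).mpr ⟨hne, hv'⟩)
  have hcard : #{v | Q v = 0} = 21 := by
    have : #{v | ellipticForm v = 0} = 21 := by
      simp only [ellipticForm_apply]
      decide +kernel
    rw [← this]
    exact card_equiv (e ≪≫ₗ e'.symm).toEquiv fun v => by simp only [mem_filter_univ]; rfl
  obtain ⟨Γ, hΓ⟩ := exists_exchange hdisj hcard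
  let φ : (Fin 4 → ZMod 3) ≃ᵃ[ZMod 3] V := e.toAffineEquiv.trans (AffineEquiv.constVAdd _ V a)
  let γ : V ≃ᵃ[ZMod 3] V := (φ.symm.trans Γ.toAffineEquiv).trans φ
  have hγ (v) : γ (a + e v) = a + e (Γ v) := congrArg φ (congrArg Γ (φ.symm_apply_apply v))
  have hmem (v) : a + e v ∈ A ∪ B ↔ v ≠ 0 ∧ ellipticForm v * Q v = 0 := by
    rw [mem_union, he, hQ, ← and_or_left, mul_eq_zero]
  refine ⟨γ, ext fun y => ?_⟩
  obtain ⟨x, rfl⟩ := γ.surjective y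
  obtain ⟨v, rfl⟩ := φ.surjective x
  change γ.toEquiv.toEmbedding (a + e v) ∈ _ ↔ γ (a + e v) ∈ _
  rw [mem_map', hmem, hγ, mem_sdiff, hmem, mem_sdiff, mem_singleton, add_eq_left]
  obtain rfl | hv := eq_or_ne v 0
  · simp
  · simp [hv, -mul_eq_zero, hΓ v hv]

end Cone

section Tiling

open Finset Module

theorem isCap_iff_threeAPFree {n : ℕ} {C : Finset (Fin n → ZMod 3)} :
    IsCap C ↔ ThreeAPFree (C : Set (Fin n → ZMod 3)) := by
  rw [threeAPFree_iff_add_add_eq_zero]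
  refine ⟨fun h x hx y hy z hz hsum => ?_, fun h x hx y hy z hz hxy _ _ hsum =>
    hxy (h x hx y hy z hz hsum)⟩
  by_contra hxy
  refine h x hx y hy z hz hxy (fun hxz => hxy ?_) (fun hyz => hxy ?_) hsum
  · subst hxz
    have := add_add_self_eq_zero x
    rw [add_right_comm] at hsum
    exact add_left_cancel (this.trans hsum.symm)
  · subst hyz
    exact add_right_cancel (add_right_cancel (hsum.trans (add_add_self_eq_zero y).symm))

theorem IsCap.map_affineEquiv {n : ℕ} {C : Finset (Fin n → ZMod 3)} (hC : IsCap C)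
    (γ : (Fin n → ZMod 3) ≃ᵃ[ZMod 3] (Fin n → ZMod 3)) :
    IsCap (C.map γ.toEquiv.toEmbedding) := by
  rw [isCap_iff_threeAPFree] at hC ⊢
  have hvsub (x y : Fin n → ZMod 3) : γ x - γ y = γ.linear (x - y) :=
    (γ.toAffineMap.linearMap_vsub x y).symm
  rw [coe_map]
  rintro _ ⟨x, hx, rfl⟩ _ ⟨y, hy, rfl⟩ _ ⟨z, hz, rfl⟩ h
  have h : γ x + γ z = γ y + γ y := h
  rw [← sub_eq_sub_iff_add_eq_add, hvsub, hvsub, γ.linear.injective.eq_iff,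
    sub_eq_sub_iff_add_eq_add] at h
  exact congrArg γ (hC hx hy hz h)

theorem MaximalCap.map_affineEquiv {n : ℕ} {C : Finset (Fin n → ZMod 3)} (hC : MaximalCap C)
    (γ : (Fin n → ZMod 3) ≃ᵃ[ZMod 3] (Fin n → ZMod 3)) :
    MaximalCap (C.map γ.toEquiv.toEmbedding) :=
  ⟨hC.1.map_affineEquiv γ, fun D hD => by rw [card_map]; exact hC.2 D hD⟩

theorem MaximalCap.card_eq {n : ℕ} {C D : Finset (Fin n → ZMod 3)} (hC : MaximalCap C)
    (hD : MaximalCap D) : #C = #D :=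
  le_antisymm (hD.2 C hC.1) (hC.2 D hD.1)

theorem MaximalCap.nonempty {n : ℕ} {C : Finset (Fin n → ZMod 3)} (hC : MaximalCap C) :
    C.Nonempty := by
  have : IsCap ({0} : Finset (Fin n → ZMod 3)) := by simp [IsCap]
  exact card_pos.mp (hC.2 _ this)

/-- `T` consists of `k` pairwise disjoint maximal caps with union `U`. -/
def IsTiling {n : ℕ} (k : ℕ) (U : Finset (Fin n → ZMod 3))
    (T : Finset (Finset (Fin n → ZMod 3))) : Prop :=
  #T = k ∧ (∀ C ∈ T, MaximalCap C) ∧ (T : Set (Finset (Fin n → ZMod 3))).PairwiseDisjoint id ∧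
    T.sup id = U

theorem isCapPartition_iff_exists_isTiling {P : Finset (Finset (Fin 4 → ZMod 3))} :
    IsCapPartition P ↔ ∃ a, IsTiling 4 (univ \ {a}) P := by
  simp only [IsCapPartition, IsTiling, Set.PairwiseDisjoint, Set.Pairwise, SetLike.mem_coe,
    Function.onFun, id, exists_and_left]

variable {n k j : ℕ} {U W : Finset (Fin n → ZMod 3)} {T R : Finset (Finset (Fin n → ZMod 3))}

theorem IsTiling.subset (hT : IsTiling k U T) (hRT : R ⊆ T) : IsTiling #R (R.sup id) R :=
  ⟨rfl, fun C hC => hT.2.1 C (hRT hC), hT.2.2.1.subset (coe_subset.mpr hRT), rfl⟩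

theorem IsTiling.disjoint (hT : IsTiling k U T) (hR : IsTiling j W R) (hUW : Disjoint U W) :
    Disjoint T R := by
  refine disjoint_left.mpr fun C hCT hCR => (hT.2.1 C hCT).nonempty.ne_empty ?_
  have hCU : C ⊆ U := hT.2.2.2 ▸ le_sup (f := id) hCT
  have hCW : C ⊆ W := hR.2.2.2 ▸ le_sup (f := id) hCR
  exact disjoint_self.mp (disjoint_of_subset_left hCU (disjoint_of_subset_right hCW hUW))

theorem IsTiling.union (hT : IsTiling k U T) (hR : IsTiling j W R) (hUW : Disjoint U W) :
    IsTiling (k + j) (U ∪ W) (T ∪ R) := by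
  have hTR := hT.disjoint hR hUW
  obtain ⟨rfl, hTmax, hTdisj, rfl⟩ := hT
  obtain ⟨rfl, hRmax, hRdisj, rfl⟩ := hR
  refine ⟨card_union_of_disjoint hTR, fun C hC => (mem_union.mp hC).elim (hTmax C) (hRmax C), ?_,
    sup_union⟩
  rw [coe_union, Set.pairwiseDisjoint_union]
  exact ⟨hTdisj, hRdisj, fun C hC D hD _ => hUW.mono (le_sup (f := id) hC) (le_sup (f := id) hD)⟩

theorem IsTiling.sdiff (hT : IsTiling (k + j) U T) (hR : IsTiling j W R) (hRT : R ⊆ T) :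
    IsTiling k (U \ W) (T \ R) := by
  obtain ⟨rfl, -, -, rfl⟩ := hR
  obtain ⟨hcard, hmax, hdisj, rfl⟩ := hT
  refine ⟨by rw [card_sdiff_of_subset hRT, hcard, Nat.add_sub_cancel],
    fun C hC => hmax C (sdiff_subset hC), hdisj.subset (coe_subset.mpr sdiff_subset), ?_⟩
  have hsup : Disjoint ((T \ R).sup id) (R.sup id) := by
    rw [Finset.disjoint_sup_left]
    intro C hC
    rw [Finset.disjoint_sup_right]
    obtain ⟨hCT, hCR⟩ := mem_sdiff.mp hC
    exact fun D hD => hdisj hCT (hRT hD) fun h => hCR (h ▸ hD)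
  rw [← sdiff_union_of_subset hRT, sup_union, sdiff_union_of_subset hRT]
  exact (union_sdiff_cancel_right hsup).symm

theorem IsTiling.natCard_superset (hR : IsTiling j W R) (hWU : W ⊆ U) (k : ℕ) :
    Nat.card {T // IsTiling (k + j) U T ∧ R ⊆ T} = Nat.card {T // IsTiling k (U \ W) T} := by
  have hdisj : Disjoint (U \ W) W := sdiff_disjoint
  refine Nat.card_congr ⟨fun T => ⟨T.1 \ R, T.2.1.sdiff hR T.2.2⟩, fun T => ⟨T.1 ∪ R, ?_,
    subset_union_right⟩, fun T => Subtype.ext (sdiff_union_of_subset T.2.2), fun T =>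
    Subtype.ext (union_sdiff_cancel_right (T.2.disjoint hR hdisj))⟩
  have := T.2.union hR hdisj
  rwa [sdiff_union_of_subset hWU] at this

theorem IsTiling.map_affineEquiv (hT : IsTiling k U T)
    (γ : (Fin n → ZMod 3) ≃ᵃ[ZMod 3] (Fin n → ZMod 3)) :
    IsTiling k (γ.toEquiv.finsetCongr U) (γ.toEquiv.finsetCongr.finsetCongr T) := by
  obtain ⟨rfl, hmax, hdisj, rfl⟩ := hT
  refine ⟨card_map _, ?_, ?_, ?_⟩
  · intro D hD
    obtain ⟨C, hC, rfl⟩ := mem_map.mp hD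
    exact (hmax C hC).map_affineEquiv γ
  · intro D hD D' hD' hne
    obtain ⟨C, hC, rfl⟩ := mem_map.mp hD
    obtain ⟨C', hC', rfl⟩ := mem_map.mp hD'
    exact (disjoint_map _).mpr (hdisj hC hC' fun h => hne (h ▸ rfl))
  · ext y
    simp [mem_sup, γ.toEquiv.finsetCongr.finsetCongr_apply]

theorem natCard_isTiling_map_affineEquiv (k : ℕ) (U : Finset (Fin n → ZMod 3))
    (γ : (Fin n → ZMod 3) ≃ᵃ[ZMod 3] (Fin n → ZMod 3)) :
    Nat.card {T // IsTiling k (U.map γ.toEquiv.toEmbedding) T} =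
      Nat.card {T // IsTiling k U T} := by
  refine (Nat.card_congr (γ.toEquiv.finsetCongr.finsetCongr.subtypeEquiv fun T =>
    ⟨fun hT => hT.map_affineEquiv γ, fun hT => ?_⟩)).symm
  have h : IsTiling k (γ.toEquiv.finsetCongr.symm (γ.toEquiv.finsetCongr U))
      (γ.toEquiv.finsetCongr.finsetCongr.symm (γ.toEquiv.finsetCongr.finsetCongr T)) :=
    hT.map_affineEquiv γ.symm
  rwa [Equiv.symm_apply_apply, Equiv.symm_apply_apply] at h

theorem IsTiling.isPuncturedCone {a : Fin 4 → ZMod 3} {P : Finset (Finset (Fin 4 → ZMod 3))}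
    (hP : IsTiling 4 (univ \ {a}) P) {C : Finset (Fin 4 → ZMod 3)} (hC : C ∈ P) :
    IsPuncturedCone C a := by
  obtain ⟨hcard, hmax, hdisj, hsup⟩ := hP
  have h20 (D) (hD : D ∈ P) : #D = 20 := by
    have hsum : ∑ D ∈ P, #D = 80 := by
      have := congrArg card hsup
      rw [sup_eq_biUnion, card_biUnion hdisj, card_sdiff_of_subset (subset_univ _)] at this
      simpa using this
    rw [sum_congr rfl fun E hE => (hmax E hE).card_eq (hmax D hD), sum_const, hcard] at hsum
    simp only [smul_eq_mul] at hsum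
    lia
  exact isPuncturedCone_of_sup_eq_sdiff (Module.finrank_fin_fun _)
    (fun D hD => isCap_iff_threeAPFree.mp (hmax D hD).1) h20 hcard hdisj hsup C hC

theorem IsTiling.natCard_isCapPartition {a : Fin 4 → ZMod 3}
    {P : Finset (Finset (Fin 4 → ZMod 3))} (hP : IsTiling 4 (univ \ {a}) P)
    {A B : Finset (Fin 4 → ZMod 3)} (hA : A ∈ P) (hB : B ∈ P) (hAB : A ≠ B) :
    Nat.card {P // IsCapPartition P ∧ A ∈ P ∧ B ∈ P} =
      Nat.card {T // IsTiling 2 ((univ \ {a}) \ (A ∪ B)) T} := by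
  have hpair : IsTiling 2 (A ∪ B) {A, B} := by
    have := hP.subset (R := {A, B}) (by simp [insert_subset_iff, hA, hB])
    rwa [card_pair hAB, sup_insert, sup_singleton] at this
  have hsub : A ∪ B ⊆ univ \ {a} :=
    hP.2.2.2 ▸ union_subset (le_sup (f := id) hA) (le_sup (f := id) hB)
  rw [← hpair.natCard_superset hsub 2]
  refine Nat.card_congr (Equiv.subtypeEquivRight fun Q => ?_)
  rw [isCapPartition_iff_exists_isTiling, insert_subset_iff, singleton_subset_iff]
  refine and_congr_left fun hABQ => ⟨fun ⟨b, hQ⟩ => ?_, fun hQ => ⟨a, hQ⟩⟩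
  have hba : b = a := (hQ.isPuncturedCone hABQ.1).eq_neg_sum.trans
    (hP.isPuncturedCone hA).eq_neg_sum.symm
  exact hba ▸ hQ

theorem cap_partition_pairing_AG43_general {A B C D : Finset (Fin 4 → ZMod 3)}
    (hAB : A ≠ B) (hAC : A ≠ C) (hAD : A ≠ D) (hBC : B ≠ C) (hBD : B ≠ D) (hCD : C ≠ D)
    (hpart : IsCapPartition {A, B, C, D}) :
    Nat.card {P // IsCapPartition P ∧ A ∈ P ∧ B ∈ P} =
      Nat.card {P // IsCapPartition P ∧ C ∈ P ∧ D ∈ P} := by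
  obtain ⟨a, hP⟩ := isCapPartition_iff_exists_isTiling.mp hpart
  have hA : A ∈ ({A, B, C, D} : Finset _) := by simp
  have hB : B ∈ ({A, B, C, D} : Finset _) := by simp
  have hC : C ∈ ({A, B, C, D} : Finset _) := by simp
  have hD : D ∈ ({A, B, C, D} : Finset _) := by simp
  have hdisj : Disjoint (A ∪ B) (C ∪ D) := by
    simp only [disjoint_union_left, disjoint_union_right]
    exact ⟨⟨hP.2.2.1 hA hC hAC, hP.2.2.1 hB hC hBC⟩, hP.2.2.1 hA hD hAD, hP.2.2.1 hB hD hBD⟩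
  have hcompl : (univ \ {a}) \ (C ∪ D) = A ∪ B := by
    rw [← hP.2.2.2, ← union_sdiff_cancel_right hdisj]
    simp [union_assoc]
  obtain ⟨γ, hγ⟩ := (hP.isPuncturedCone hA).exists_affineEquiv (hP.isPuncturedCone hB)
    (hP.2.2.1 hA hB hAB)
  rw [hP.natCard_isCapPartition hA hB hAB, hP.natCard_isCapPartition hC hD hCD, hcompl, ← hγ,
    natCard_isTiling_map_affineEquiv]

end Tiling

/-- In a cap-partition `{A, B, C, D}` of `AG(4,3)`, the pair `{A, B}` lies in exactly one
cap-partition iff `{C, D}` does, and likewise `{A, B}` lies in exactly two cap-partitions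
iff `{C, D}` does. -/
theorem cap_partition_pairing_AG43
    (A B C D : Finset (Fin 4 → ZMod 3))
    (hAB : A ≠ B) (hAC : A ≠ C) (hAD : A ≠ D)
    (hBC : B ≠ C) (hBD : B ≠ D) (hCD : C ≠ D)
    (hpart : IsCapPartition {A, B, C, D}) :
    (Nat.card {P : Finset (Finset (Fin 4 → ZMod 3)) //
        IsCapPartition P ∧ A ∈ P ∧ B ∈ P} = 1 ↔
     Nat.card {P : Finset (Finset (Fin 4 → ZMod 3)) //
        IsCapPartition P ∧ C ∈ P ∧ D ∈ P} = 1) ∧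
    (Nat.card {P : Finset (Finset (Fin 4 → ZMod 3)) //
        IsCapPartition P ∧ A ∈ P ∧ B ∈ P} = 2 ↔
     Nat.card {P : Finset (Finset (Fin 4 → ZMod 3)) //
        IsCapPartition P ∧ C ∈ P ∧ D ∈ P} = 2) := by
  have hcount := cap_partition_pairing_AG43_general hAB hAC hAD hBC hBD hCD hpart
  exact ⟨by rw [hcount], by rw [hcount]⟩
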